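/- As t → 0⁺, the rescaled heat kernels of SU(2) converge to Gaveau's heat kernel of the Heisenberg group: for every compact set K ⊂ [0, ∞) × ℝ, the functions (r, z) ↦ t² · p_t(√t · r, t · z) converge uniformly on K, as t → 0⁺, to (r, z) ↦ 2π² · h_1(r, z). -/

import Mathlib

open Real

/-- The Jacobi polynomial `P_k^{0,m}` defined by the Rodrigues-type formula. -/
noncomputable def jacobiP (k m : ℕ) (x : ℝ) : ℝ :=
  ((-1 : ℝ) ^ k / (2 ^ k * (Nat.factorial k : ℝ) * (1 + x) ^ m)) *
    iteratedDeriv k (fun y : ℝ => (1 + y) ^ m * (1 - y ^ 2) ^ k) x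

/-- The general term of the double series defining the subelliptic heat kernel on `SU(2)`. -/
noncomputable def heatTerm (t r z : ℝ) (n : ℤ) (k : ℕ) : ℂ :=
  (((2 * (k : ℝ) + (n.natAbs : ℝ) + 1) *
      Real.exp (-(4 * (k : ℝ) * ((k : ℝ) + (n.natAbs : ℝ) + 1) + 2 * (n.natAbs : ℝ)) * t) *
      (Real.cos r) ^ n.natAbs * jacobiP k n.natAbs (Real.cos (2 * r)) : ℝ) : ℂ) *
    Complex.exp ((n : ℂ) * (z : ℂ) * Complex.I)

/-- The subelliptic heat kernel `p_t(r,z)` on `SU(2)` in cylindric coordinates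
(the double series is real-valued). -/
noncomputable def heatP (t r z : ℝ) : ℝ := (∑' n : ℤ, ∑' k : ℕ, heatTerm t r z n k).re

/-- Gaveau's heat kernel of the three-dimensional Heisenberg group in cylindric
coordinates (with respect to the Lebesgue measure `r dr dθ dz`). -/
noncomputable def heisKer (t r z : ℝ) : ℝ :=
  (1 / (16 * Real.pi ^ 2)) *
    (∫ l : ℝ, Complex.exp (Complex.I * (l : ℂ) * (z : ℂ) / 2) *
        ((l : ℂ) / Complex.sinh ((l : ℂ) * (t : ℂ))) *
        Complex.exp (-(((r : ℂ) ^ 2 / 4) * (l : ℂ) *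
          (Complex.cosh ((l : ℂ) * (t : ℂ)) / Complex.sinh ((l : ℂ) * (t : ℂ)))))).re

/-!
Put `μ = t n`. Then `t²` times the sum over `n` is a Riemann sum of mesh `t`, that is, the integral
over `μ` of a step function. With `μ` and `k` fixed, `(cos (√t r)) ^ n * P_k^{0,n} (cos (2 √t r))`
tends to `exp (-|μ| r² / 2) * L_k (|μ| r²)`, where `L_k` is a Laguerre polynomial. The step
functions are dominated by a multiple of `(k + 1)⁻¹ * exp (-(k + 1) |μ|)`, whose integrals are
summable in `k`, so the limit may be taken inside both the sum over `k` and the integral over `μ`.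
The generating function of the Laguerre polynomials at `exp (-4 |μ|)` then turns the sum over `k`
into Gaveau's integrand at `λ = 2 μ`.

Since `(r, z)` may vary together with `t` in this argument, the convergence is locally uniform.
-/

open MeasureTheory Filter Topology
open scoped Nat

namespace SU2Heat

/-! ### Limits along a filter -/

section Limits

variable {ι : Type*} {l : Filter ι}

theorem tendstoLocallyUniformly_of_forall_tendsto_prod {α β : Type*} [TopologicalSpace α]
    [UniformSpace β] [l.NeBot] {F : ι → α → β} {f : α → β}
    (h : ∀ x, Tendsto (fun q : ι × α => F q.1 q.2) (l ×ˢ 𝓝 x) (𝓝 (f x))) :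
    TendstoLocallyUniformly F f l := by
  have hf : Continuous f := by
    refine continuous_iff_continuousAt.2 fun x => (closed_nhds_basis (f x)).tendsto_right_iff.2 ?_
    rintro V ⟨hV, hV_closed⟩
    filter_upwards [(prod_comm.symm ▸ (h x).eventually hV : ∀ᶠ q in map _ _, _).curry] with y hy
    have hFy : Tendsto (fun i => F i y) l (𝓝 (f y)) :=
      (h y).comp (tendsto_id.prodMk tendsto_const_nhds)
    exact hV_closed.mem_of_tendsto hFy hy
  refine tendstoLocallyUniformly_iff_forall_tendsto.2 fun x => ?_
  exact (((hf.tendsto x).comp tendsto_snd).prodMk_nhds (h x)).mono_right (nhds_le_uniformity _)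

theorem tendsto_one_add_pow_exp {u : ι → ℝ} {n : ι → ℕ} {c : ℝ} (hu : Tendsto u l (𝓝 0))
    (hnu : Tendsto (fun i => n i * u i) l (𝓝 c)) :
    Tendsto (fun i => (1 + u i) ^ n i) l (𝓝 (exp c)) := by
  have h1u : Tendsto (fun i => 1 + u i) l (𝓝 1) := by simpa using hu.const_add 1
  have hpos : ∀ᶠ i in l, 0 < 1 + u i := h1u.eventually (lt_mem_nhds one_pos)
  have hlower : Tendsto (fun i => n i * u i / (1 + u i)) l (𝓝 c) := by
    rw [← div_one c]
    exact hnu.div h1u one_ne_zero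
  have hlog : Tendsto (fun i => n i * log (1 + u i)) l (𝓝 c) := by
    refine tendsto_of_tendsto_of_tendsto_of_le_of_le' hlower hnu ?_ ?_
    · filter_upwards [hpos] with i hi
      have hle : u i / (1 + u i) ≤ log (1 + u i) := by
        convert one_sub_inv_le_log_of_pos hi using 1
        field_simp
        ring
      rw [mul_div_assoc]
      gcongr
    · filter_upwards [hpos] with i hi
      have hle := log_le_sub_one_of_pos hi
      gcongr
      linarith
  refine hlog.rexp.congr' ?_
  filter_upwards [hpos] with i hi
  rw [exp_nat_mul, exp_log hi]

theorem tendsto_choose_mul_pow {t : ι → ℝ} {n : ι → ℕ} {a : ℝ} (ht : Tendsto t l (𝓝 0))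
    (hn : Tendsto (fun i => t i * n i) l (𝓝 a)) (j : ℕ) :
    Tendsto (fun i => ((n i).choose j : ℝ) * t i ^ j) l (𝓝 (a ^ j / j !)) := by
  have hprod : Tendsto (fun i => (∏ m ∈ Finset.range j, (t i * n i - t i * m)) / (j ! : ℝ)) l
      (𝓝 ((∏ _m ∈ Finset.range j, a) / j !)) := by
    refine (tendsto_finsetProd _ fun m _ => ?_).div_const _
    simpa using hn.sub (ht.mul_const (m : ℝ))
  rw [Finset.prod_const, Finset.card_range] at hprod
  refine hprod.congr fun i => ?_
  have hchoose : (j ! : ℝ) * (n i).choose j = ∏ m ∈ Finset.range j, ((n i : ℝ) - m) := by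
    rw [← descPochhammer_eval_eq_prod_range, descPochhammer_eval_eq_descFactorial,
      Nat.descFactorial_eq_factorial_mul_choose, Nat.cast_mul]
  simp only [← mul_sub, Finset.prod_mul_distrib, Finset.prod_const, Finset.card_range, ← hchoose]
  field_simp

theorem abs_mul_floor_div_sub_le {t : ℝ} (ht : 0 < t) (μ : ℝ) : |t * ⌊μ / t⌋ - μ| ≤ t := by
  have hle := (le_div_iff₀ ht).1 (Int.floor_le (μ / t))
  have hlt := (div_lt_iff₀ ht).1 (Int.lt_floor_add_one (μ / t))
  rw [abs_le]
  constructor <;> linarith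

theorem abs_mul_natAbs_floor_div_sub_abs_le {t : ℝ} (ht : 0 < t) (μ : ℝ) :
    |t * ⌊μ / t⌋.natAbs - (|μ|)| ≤ t := by
  have habs : t * (⌊μ / t⌋.natAbs : ℝ) = |t * ⌊μ / t⌋| := by
    rw [abs_mul, abs_of_pos ht, Nat.cast_natAbs, Int.cast_abs]
  rw [habs]
  exact (abs_abs_sub_abs_le _ _).trans (abs_mul_floor_div_sub_le ht μ)

theorem tendsto_mul_floor_div {t : ι → ℝ} (ht : Tendsto t l (𝓝[>] 0)) (μ : ℝ) :
    Tendsto (fun i => t i * ⌊μ / t i⌋) l (𝓝 μ) := by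
  refine tendsto_iff_dist_tendsto_zero.2 (squeeze_zero' (.of_forall fun _ => dist_nonneg) ?_
    (tendsto_nhds_of_tendsto_nhdsWithin ht))
  exact (ht.eventually self_mem_nhdsWithin).mono fun i hi => abs_mul_floor_div_sub_le hi μ

theorem tendsto_mul_natAbs_floor_div {t : ι → ℝ} (ht : Tendsto t l (𝓝[>] 0)) (μ : ℝ) :
    Tendsto (fun i => t i * ⌊μ / t i⌋.natAbs) l (𝓝 |μ|) := by
  refine tendsto_iff_dist_tendsto_zero.2 (squeeze_zero' (.of_forall fun _ => dist_nonneg) ?_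
    (tendsto_nhds_of_tendsto_nhdsWithin ht))
  exact (ht.eventually self_mem_nhdsWithin).mono fun i hi =>
    abs_mul_natAbs_floor_div_sub_abs_le hi μ

end Limits

/-! ### Integrals over the line -/

section Integrals

theorem integral_comp_floor {E : Type*} [NormedAddCommGroup E] [NormedSpace ℝ E] [CompleteSpace E]
    {f : ℤ → E} (hf : Summable fun n => ‖f n‖) : ∫ x : ℝ, f ⌊x⌋ = ∑' n, f n := by
  have hfloor : ∀ n : ℤ, ∀ x ∈ Set.Ico (n : ℝ) (n + 1), ⌊x⌋ = n := fun n x hx =>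
    Int.floor_eq_iff.2 hx
  have hcell : ∀ n : ℤ, ∫ x in Set.Ico (n : ℝ) (n + 1), f ⌊x⌋ = f n := fun n => by
    rw [setIntegral_congr_fun (g := fun _ => f n) measurableSet_Ico
      fun x hx => congrArg f (hfloor n x hx)]
    simp
  have hcell_norm : ∀ n : ℤ, ∫ x in Set.Ico (n : ℝ) (n + 1), ‖f ⌊x⌋‖ = ‖f n‖ := fun n => by
    rw [setIntegral_congr_fun (g := fun _ => ‖f n‖) measurableSet_Ico
      fun x hx => congrArg (‖f ·‖) (hfloor n x hx)]
    simp
  have hf_int : IntegrableOn (fun x : ℝ => f ⌊x⌋) (⋃ n : ℤ, Set.Ico (n : ℝ) (n + 1)) := by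
    refine integrableOn_iUnion_of_summable_integral_norm (fun n => ?_) (by simpa only [hcell_norm])
    exact (integrableOn_const (C := f n) (by simp)).congr_fun
      (fun x hx => congrArg f (hfloor n x hx).symm) measurableSet_Ico
  have hsum := hasSum_integral_iUnion (fun _ => measurableSet_Ico)
    (Set.pairwise_disjoint_Ico_intCast ℝ) hf_int
  simp only [hcell, iUnion_Ico_intCast, setIntegral_univ] at hsum
  exact hsum.tsum_eq.symm

theorem integral_comp_floor_div {E : Type*} [NormedAddCommGroup E] [NormedSpace ℝ E]
    [CompleteSpace E] {f : ℤ → E} (hf : Summable fun n => ‖f n‖) {t : ℝ} (ht : 0 ≤ t) :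
    ∫ x : ℝ, f ⌊x / t⌋ = t • ∑' n, f n := by
  rw [Measure.integral_comp_div (fun x => f ⌊x⌋) t, integral_comp_floor hf, abs_of_nonneg ht]

theorem integral_exp_neg_mul_abs {a : ℝ} (ha : 0 < a) : ∫ x : ℝ, exp (-(a * |x|)) = 2 / a := by
  have hIoi := integral_exp_mul_Ioi (neg_lt_zero.2 ha) 0
  simp only [neg_mul, mul_zero, exp_zero, neg_div_neg_eq] at hIoi
  rw [integral_comp_abs (f := fun x => exp (-(a * x))), hIoi, mul_one_div]

theorem integrable_exp_neg_mul_abs {a : ℝ} (ha : 0 < a) :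
    Integrable fun x : ℝ => exp (-(a * |x|)) :=
  not_imp_comm.1 integral_undef (by rw [integral_exp_neg_mul_abs ha]; positivity)

end Integrals

/-! ### Jacobi polynomials -/

section Jacobi

theorem iteratedDeriv_one_add_pow_mul_one_sub_pow (k a b : ℕ) (x : ℝ) :
    iteratedDeriv k (fun y : ℝ => (1 + y) ^ a * (1 - y) ^ b) x =
      ∑ j ∈ Finset.range (k + 1), (k.choose j : ℝ) * (a.descFactorial j * (1 + x) ^ (a - j)) *
        ((-1) ^ (k - j) * (b.descFactorial (k - j) * (1 - x) ^ (b - (k - j)))) := by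
  rw [iteratedDeriv_fun_mul (by fun_prop) (by fun_prop)]
  refine Finset.sum_congr rfl fun j _ => ?_
  rw [iteratedDeriv_comp_const_add j (fun y : ℝ => y ^ a) 1,
    iteratedDeriv_comp_const_sub (k - j) (fun y : ℝ => y ^ b) 1]
  simp only [iteratedDeriv_pow, smul_eq_mul]

theorem jacobiP_eq_sum (k m : ℕ) {x : ℝ} (hx : 1 + x ≠ 0) :
    jacobiP k m x = ∑ j ∈ Finset.range (k + 1),
      (k.choose j : ℝ) * (m + k).choose j * ((x - 1) / 2) ^ j * ((1 + x) / 2) ^ (k - j) := by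
  have hfactor : (fun y : ℝ => (1 + y) ^ m * (1 - y ^ 2) ^ k) =
      fun y => (1 + y) ^ (m + k) * (1 - y) ^ k := by
    funext y
    rw [pow_add, mul_assoc, ← mul_pow]
    ring
  rw [jacobiP, hfactor, iteratedDeriv_one_add_pow_mul_one_sub_pow, Finset.mul_sum]
  refine Finset.sum_congr rfl fun j hj => ?_
  obtain ⟨d, rfl⟩ := Nat.exists_eq_add_of_le (Finset.mem_range_succ_iff.1 hj)
  have hdesc : ((j + d)! : ℝ) = j ! * (j + d).descFactorial d := by
    exact_mod_cast (by simpa using (Nat.factorial_mul_descFactorial (Nat.le_add_left d j)).symm)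
  have hdesc_ne : ((j + d).descFactorial d : ℝ) ≠ 0 := by
    simp [Nat.descFactorial_eq_zero_iff_lt]
  have hsign : (-1 : ℝ) ^ d * (-1) ^ d = 1 := by rw [← mul_pow]; norm_num
  rw [Nat.add_sub_cancel_left, Nat.add_sub_cancel, ← add_assoc, Nat.add_right_comm,
    Nat.add_sub_cancel, Nat.descFactorial_eq_factorial_mul_choose (m + d + j) j, hdesc,
    ← neg_sub 1 x, neg_div, neg_pow ((1 - x) / 2) j, div_pow, div_pow, pow_add (-1 : ℝ),
    pow_add (2 : ℝ), pow_add (1 + x)]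
  push_cast
  field_simp
  linear_combination ((j + d).choose j * (m + d + j).choose j * (1 - x) ^ j : ℝ) * hsign

theorem jacobiP_cos_two_mul (k m : ℕ) {x : ℝ} (hx : cos x ≠ 0) :
    jacobiP k m (cos (2 * x)) = ∑ j ∈ Finset.range (k + 1),
      (k.choose j : ℝ) * (m + k).choose j * (-sin x ^ 2) ^ j * (cos x ^ 2) ^ (k - j) := by
  have hcos : (1 + cos (2 * x)) / 2 = cos x ^ 2 := by rw [cos_two_mul]; ring
  have hsin : (cos (2 * x) - 1) / 2 = -sin x ^ 2 := by rw [cos_two_mul, cos_sq']; ring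
  have hne : 1 + cos (2 * x) ≠ 0 := by
    rw [cos_two_mul, add_sub_cancel]
    positivity
  rw [jacobiP_eq_sum k m hne, hcos, hsin]

theorem abs_cos_pow_mul_jacobiP_le (k m : ℕ) {x a b : ℝ} (hx : cos x ≠ 0) (ha : 0 ≤ a)
    (hb : 0 ≤ b) (hab : sin x ^ 2 ≤ a * b) :
    |cos x ^ m * jacobiP k m (cos (2 * x))| ≤ exp a * exp (k * (m + k) * b) := by
  have hterm : ∀ j, |(k.choose j : ℝ) * (m + k).choose j * (-sin x ^ 2) ^ j *
      (cos x ^ 2) ^ (k - j)| ≤ a ^ j / j ! * exp (k * (m + k) * b) := fun j => by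
    have hk : (k.choose j : ℝ) ≤ (k : ℝ) ^ j / j ! := Nat.choose_le_pow_div _ _
    have hmk : ((m + k).choose j : ℝ) ≤ ((m + k : ℕ) : ℝ) ^ j / j ! := Nat.choose_le_pow_div _ _
    have hcos : (cos x ^ 2) ^ (k - j) ≤ 1 := pow_le_one₀ (sq_nonneg _) (cos_sq_le_one x)
    calc |(k.choose j : ℝ) * (m + k).choose j * (-sin x ^ 2) ^ j * (cos x ^ 2) ^ (k - j)|
        = k.choose j * (m + k).choose j * (sin x ^ 2) ^ j * (cos x ^ 2) ^ (k - j) := by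
          simp only [abs_mul, abs_pow, abs_neg, Nat.abs_cast, sq_abs]
      _ ≤ (k : ℝ) ^ j / j ! * (((m + k : ℕ) : ℝ) ^ j / j !) * (a * b) ^ j * 1 := by gcongr
      _ = a ^ j / j ! * ((k * (m + k) * b) ^ j / j !) := by
          push_cast
          simp only [mul_pow]
          ring
      _ ≤ a ^ j / j ! * exp (k * (m + k) * b) := by
          gcongr
          exact pow_div_factorial_le_exp _ (by positivity) j
  have hcos_pow : |cos x ^ m| ≤ 1 := by
    rw [abs_pow]
    exact pow_le_one₀ (abs_nonneg _) (abs_cos_le_one x)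
  rw [jacobiP_cos_two_mul k m hx, abs_mul]
  calc _ ≤ ∑ j ∈ Finset.range (k + 1), a ^ j / j ! * exp (k * (m + k) * b) :=
        (mul_le_of_le_one_left (abs_nonneg _) hcos_pow).trans
          ((Finset.abs_sum_le_sum_abs _ _).trans (Finset.sum_le_sum fun j _ => hterm j))
    _ ≤ exp a * exp (k * (m + k) * b) := by
        rw [← Finset.sum_mul]
        gcongr
        exact sum_le_exp_of_nonneg ha _

end Jacobi

/-! ### Laguerre polynomials and their generating function -/

section Laguerre

/-- The Laguerre polynomial `L_k`, as a real function given by its explicit expansion. The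
rescaled Jacobi polynomials `P_k^{0,n}` converge to it. -/
noncomputable def laguerre (k : ℕ) (x : ℝ) : ℝ :=
  ∑ j ∈ Finset.range (k + 1), (k.choose j : ℝ) * ((-x) ^ j / j !)

@[fun_prop]
theorem continuous_laguerre (k : ℕ) : Continuous (laguerre k) := by
  unfold laguerre
  fun_prop

theorem hasSum_choose_mul_pow {𝕜 : Type*} [NormedField 𝕜] [CompleteSpace 𝕜] (j : ℕ) {w : 𝕜}
    (hw : ‖w‖ < 1) :
    HasSum (fun k : ℕ => (k.choose j : 𝕜) * w ^ k) (w ^ j / (1 - w) ^ (j + 1)) := by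
  have hzero : ∑ i ∈ Finset.range j, (i.choose j : 𝕜) * w ^ i = 0 :=
    Finset.sum_eq_zero fun i hi => by simp [Nat.choose_eq_zero_of_lt (Finset.mem_range.1 hi)]
  rw [← hasSum_nat_add_iff' j, hzero, sub_zero, div_eq_mul_one_div]
  refine ((hasSum_choose_mul_geometric_of_norm_lt_one j hw).mul_left (w ^ j)).congr_fun fun k => ?_
  ring

theorem hasSum_pow_div_factorial (x : ℝ) : HasSum (fun j : ℕ => x ^ j / (j ! : ℝ)) (exp x) := by
  rw [exp_eq_exp_ℝ]
  exact NormedSpace.expSeries_div_hasSum_exp x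

theorem hasSum_pow_div_factorial_mul_choose (x : ℝ) (j : ℕ) {w : ℝ} (hw : |w| < 1) :
    HasSum (fun k : ℕ => x ^ j / j ! * (k.choose j * w ^ k))
      (1 / (1 - w) * ((x * w / (1 - w)) ^ j / j !)) := by
  have hval : 1 / (1 - w) * ((x * w / (1 - w)) ^ j / (j ! : ℝ)) =
      x ^ j / j ! * (w ^ j / (1 - w) ^ (j + 1)) := by
    simp only [div_eq_mul_inv, mul_pow, mul_inv, inv_pow, pow_succ]
    ring
  rw [hval]
  rw [← norm_eq_abs] at hw
  exact (hasSum_choose_mul_pow j hw).mul_left _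

theorem summable_pow_div_factorial_mul_choose (x : ℝ) {w : ℝ} (hw : |w| < 1) :
    Summable fun a : ℕ × ℕ => x ^ a.1 / a.1 ! * (a.2.choose a.1 * w ^ a.2) := by
  have hsum := fun j => hasSum_pow_div_factorial_mul_choose |x| j (w := |w|) (by rwa [abs_abs])
  have hsum_abs : Summable fun a : ℕ × ℕ =>
      |x| ^ a.1 / a.1 ! * (a.2.choose a.1 * |w| ^ a.2) := by
    refine (summable_prod_of_nonneg fun _ => by dsimp; positivity).2
      ⟨fun j => (hsum j).summable, ?_⟩
    simp only [(hsum _).tsum_eq]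
    exact (hasSum_pow_div_factorial _).summable.mul_left _
  refine .of_norm (hsum_abs.congr fun a => ?_)
  simp only [norm_mul, norm_div, norm_pow, norm_eq_abs, Nat.abs_cast]

theorem hasSum_laguerre_mul_pow (x : ℝ) {w : ℝ} (hw : |w| < 1) :
    HasSum (fun k : ℕ => laguerre k x * w ^ k) (1 / (1 - w) * exp (-x * w / (1 - w))) := by
  have hsum := (summable_pow_div_factorial_mul_choose (-x) hw).hasSum
  have htotal := (hsum.prod_fiberwise fun j =>
    hasSum_pow_div_factorial_mul_choose (-x) j hw).unique
    ((hasSum_pow_div_factorial (-x * w / (1 - w))).mul_left (1 / (1 - w)))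
  rw [htotal] at hsum
  refine ((Equiv.prodComm ℕ ℕ).hasSum_iff.2 hsum).prod_fiberwise fun k => ?_
  have hlaguerre : laguerre k x * w ^ k =
      ∑ j ∈ Finset.range (k + 1), (-x) ^ j / j ! * (k.choose j * w ^ k) := by
    rw [laguerre, Finset.sum_mul]
    exact Finset.sum_congr rfl fun j _ => by ring
  rw [hlaguerre]
  refine hasSum_sum_of_ne_finset_zero fun j hj => ?_
  have hkj : k < j := by simpa [Nat.lt_succ_iff] using hj
  simp [Nat.choose_eq_zero_of_lt hkj]

end Laguerre

/-! ### From Jacobi to Laguerre polynomials -/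

section JacobiToLaguerre

variable {ι : Type*} {l : Filter ι} {t r : ι → ℝ} {r₀ : ℝ}

theorem tendsto_sqrt_mul_zero (ht : Tendsto t l (𝓝[>] 0)) (hr : Tendsto r l (𝓝 r₀)) :
    Tendsto (fun i => √(t i) * r i) l (𝓝 0) := by
  simpa using (tendsto_nhds_of_tendsto_nhdsWithin ht).sqrt.mul hr

theorem tendsto_cos_sqrt_mul (ht : Tendsto t l (𝓝[>] 0)) (hr : Tendsto r l (𝓝 r₀)) :
    Tendsto (fun i => cos (√(t i) * r i)) l (𝓝 1) := by
  simpa [Function.comp_def] using (continuous_cos.tendsto 0).comp (tendsto_sqrt_mul_zero ht hr)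

theorem eventually_cos_sqrt_mul_ne_zero (ht : Tendsto t l (𝓝[>] 0)) (hr : Tendsto r l (𝓝 r₀)) :
    ∀ᶠ i in l, cos (√(t i) * r i) ≠ 0 :=
  (tendsto_cos_sqrt_mul ht hr).eventually_ne one_ne_zero

theorem tendsto_sin_sqrt_mul_sq_div (ht : Tendsto t l (𝓝[>] 0)) (hr : Tendsto r l (𝓝 r₀)) :
    Tendsto (fun i => sin (√(t i) * r i) ^ 2 / t i) l (𝓝 (r₀ ^ 2)) := by
  have hsinc : Tendsto (fun i => sinc (√(t i) * r i)) l (𝓝 1) := by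
    simpa [Function.comp_def] using (continuous_sinc.tendsto 0).comp (tendsto_sqrt_mul_zero ht hr)
  have hlim : Tendsto (fun i => (r i * sinc (√(t i) * r i)) ^ 2) l (𝓝 (r₀ ^ 2)) := by
    simpa using (hr.mul hsinc).pow 2
  refine hlim.congr' ?_
  filter_upwards [ht.eventually self_mem_nhdsWithin] with i (hi : 0 < t i)
  have hsin : sin (√(t i) * r i) = √(t i) * r i * sinc (√(t i) * r i) := by
    by_cases h : √(t i) * r i = 0
    · simp [h]
    · rw [sinc_of_ne_zero h, mul_div_cancel₀ _ h]
  rw [hsin, mul_assoc, mul_pow √(t i), sq_sqrt hi.le, mul_div_cancel_left₀ _ hi.ne']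

theorem tendsto_cos_sqrt_mul_sub_one_div (ht : Tendsto t l (𝓝[>] 0))
    (hr : Tendsto r l (𝓝 r₀)) :
    Tendsto (fun i => (cos (√(t i) * r i) - 1) / t i) l (𝓝 (-(r₀ ^ 2 / 2))) := by
  have hlim := (tendsto_sin_sqrt_mul_sq_div ht (hr.div_const 2)).const_mul (-2)
  convert hlim using 2 with i
  · rw [show √(t i) * r i = 2 * (√(t i) * (r i / 2)) by ring, cos_two_mul, cos_sq']
    ring
  · ring

variable {n : ι → ℕ} {a : ℝ}

theorem tendsto_cos_sqrt_mul_pow (ht : Tendsto t l (𝓝[>] 0)) (hr : Tendsto r l (𝓝 r₀))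
    (hn : Tendsto (fun i => t i * n i) l (𝓝 a)) :
    Tendsto (fun i => cos (√(t i) * r i) ^ n i) l (𝓝 (exp (-(a * (r₀ ^ 2 / 2))))) := by
  have hu : Tendsto (fun i => cos (√(t i) * r i) - 1) l (𝓝 0) := by
    simpa using (tendsto_cos_sqrt_mul ht hr).sub_const 1
  have hnu : Tendsto (fun i => n i * (cos (√(t i) * r i) - 1)) l (𝓝 (-(a * (r₀ ^ 2 / 2)))) := by
    have hlim := hn.mul (tendsto_cos_sqrt_mul_sub_one_div ht hr)
    rw [mul_neg] at hlim
    refine hlim.congr' ?_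
    filter_upwards [ht.eventually self_mem_nhdsWithin] with i (hi : 0 < t i)
    field_simp
  simpa using tendsto_one_add_pow_exp hu hnu

-- A Mehler–Heine type asymptotic formula.
theorem tendsto_cos_pow_mul_jacobiP (ht : Tendsto t l (𝓝[>] 0)) (hr : Tendsto r l (𝓝 r₀))
    (hn : Tendsto (fun i => t i * n i) l (𝓝 a)) (k : ℕ) :
    Tendsto (fun i => cos (√(t i) * r i) ^ n i * jacobiP k (n i) (cos (2 * (√(t i) * r i)))) l
      (𝓝 (exp (-(a * (r₀ ^ 2 / 2))) * laguerre k (a * r₀ ^ 2))) := by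
  refine (tendsto_cos_sqrt_mul_pow ht hr hn).mul ?_
  have ht0 := tendsto_nhds_of_tendsto_nhdsWithin ht
  have hnk : Tendsto (fun i => t i * (n i + k : ℕ)) l (𝓝 a) := by
    simpa [mul_add] using hn.add (ht0.mul_const (k : ℝ))
  have hterm : ∀ j, Tendsto (fun i => (k.choose j : ℝ) * ((n i + k).choose j * t i ^ j) *
      (-(sin (√(t i) * r i) ^ 2 / t i)) ^ j * (cos (√(t i) * r i) ^ 2) ^ (k - j)) l
      (𝓝 ((k.choose j : ℝ) * ((-(a * r₀ ^ 2)) ^ j / j !))) := fun j => by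
    have hlim := (((tendsto_choose_mul_pow ht0 hnk j).const_mul (k.choose j : ℝ)).mul
      ((tendsto_sin_sqrt_mul_sq_div ht hr).neg.pow j)).mul
      (((tendsto_cos_sqrt_mul ht hr).pow 2).pow (k - j))
    convert hlim using 2
    rw [← mul_neg, mul_pow]
    ring
  refine (tendsto_finsetSum _ fun j _ => hterm j).congr' ?_
  filter_upwards [ht.eventually self_mem_nhdsWithin, eventually_cos_sqrt_mul_ne_zero ht hr]
    with i (hi : 0 < t i) hcos
  rw [jacobiP_cos_two_mul k (n i) hcos]
  refine Finset.sum_congr rfl fun j _ => ?_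
  rw [← neg_div, div_pow]
  field_simp

end JacobiToLaguerre

/-! ### The rescaled series as a sum of integrals -/

section RescaledSeries

theorem norm_heatTerm (t x z : ℝ) (n : ℤ) (k : ℕ) :
    ‖heatTerm t x z n k‖ = (2 * k + n.natAbs + 1) *
      exp (-(4 * k * (k + n.natAbs + 1) + 2 * n.natAbs) * t) *
      |cos x ^ n.natAbs * jacobiP k n.natAbs (cos (2 * x))| := by
  have hphase : (n : ℂ) * z * Complex.I = ((n * z : ℝ) : ℂ) * Complex.I := by push_cast; rfl
  rw [heatTerm, hphase, norm_mul, Complex.norm_exp_ofReal_mul_I, mul_one, Complex.norm_real,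
    norm_eq_abs, mul_assoc _ (cos x ^ _), abs_mul, abs_of_nonneg (a := _ * exp _) (by positivity)]

theorem norm_heatTerm_le {t x a : ℝ} (z : ℝ) (n : ℤ) (k : ℕ) (ht : 0 ≤ t) (hx : cos x ≠ 0)
    (ha : 0 ≤ a) (hsin : sin x ^ 2 ≤ a * (2 * t)) :
    ‖heatTerm t x z n k‖ ≤ exp a * ((2 * k + n.natAbs + 1) *
      exp (-(2 * k ^ 2 + 2 * (k + 1) * n.natAbs + 4 * k) * t)) := by
  have hexp : exp (-(4 * k * (k + n.natAbs + 1) + 2 * n.natAbs) * t) *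
      exp (k * (n.natAbs + k) * (2 * t)) =
      exp (-(2 * k ^ 2 + 2 * (k + 1) * n.natAbs + 4 * k) * t) := by
    rw [← exp_add]
    ring_nf
  calc ‖heatTerm t x z n k‖
      ≤ (2 * k + n.natAbs + 1) * exp (-(4 * k * (k + n.natAbs + 1) + 2 * n.natAbs) * t) *
          (exp a * exp (k * (n.natAbs + k) * (2 * t))) := by
        rw [norm_heatTerm]
        gcongr
        exact abs_cos_pow_mul_jacobiP_le k _ hx ha (by positivity) hsin
    _ = _ := by rw [← hexp]; ring

theorem summable_add_one_mul_exp_neg_mul {b : ℝ} (hb : 0 < b) :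
    Summable fun k : ℕ => (k + 1) * exp (-b * k) := by
  refine ((summable_pow_mul_exp_neg_nat_mul 1 hb).add
    (summable_pow_mul_exp_neg_nat_mul 0 hb)).congr fun k => ?_
  ring

theorem summable_norm_heatTerm {t x : ℝ} (z : ℝ) (ht : 0 < t) (hx : cos x ≠ 0) :
    Summable fun a : ℤ × ℕ => ‖heatTerm t x z a.1 a.2‖ := by
  have hk : Summable fun k : ℕ => 2 * ((k + 1) * exp (-(4 * t) * k)) :=
    (summable_add_one_mul_exp_neg_mul (by positivity)).mul_left 2
  have hn : Summable fun n : ℤ => (n.natAbs + 1) * exp (-(2 * t) * n.natAbs) := by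
    have hnat := summable_add_one_mul_exp_neg_mul (b := 2 * t) (by positivity)
    exact .of_nat_of_neg (by simpa using hnat) (by simpa using hnat)
  have hprod := (hn.mul_of_nonneg hk (fun _ => by dsimp; positivity)
    (fun _ => by dsimp; positivity)).mul_left (exp (sin x ^ 2 / (2 * t)))
  refine hprod.of_nonneg_of_le (fun _ => norm_nonneg _) fun ⟨n, k⟩ => ?_
  refine (norm_heatTerm_le (a := sin x ^ 2 / (2 * t)) z n k ht.le hx (by positivity)
    (div_mul_cancel₀ _ (by positivity)).ge).trans ?_
  set m : ℝ := (n.natAbs : ℝ)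
  have hm : 0 ≤ m := Nat.cast_nonneg _
  have hweight : 2 * k + m + 1 ≤ (m + 1) * (2 * (k + 1)) := by
    nlinarith [mul_nonneg hm (Nat.cast_nonneg (α := ℝ) k)]
  have hexponent : -(2 * k ^ 2 + 2 * (k + 1) * m + 4 * k) * t ≤ -(2 * t) * m + -(4 * t) * k := by
    have hnonneg : 0 ≤ (2 * k ^ 2 + 2 * k * m) * t := by positivity
    linarith
  calc _ ≤ exp (sin x ^ 2 / (2 * t)) *
        ((m + 1) * (2 * (k + 1)) * exp (-(2 * t) * m + -(4 * t) * k)) := by gcongr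
    _ = _ := by rw [exp_add]; ring

/-- The `k`-th part of the rescaled series `t² p_t(√t r, t z)`, with the sum over `n` written as
the integral over `μ` of this step function, which is constant for `n = ⌊μ / t⌋` fixed. -/
noncomputable def rescaledMode (t r z : ℝ) (k : ℕ) (μ : ℝ) : ℂ :=
  t * heatTerm t (√t * r) (t * z) ⌊μ / t⌋ k

theorem measurable_rescaledMode (t r z : ℝ) (k : ℕ) : Measurable (rescaledMode t r z k) :=
  ((measurable_of_countable fun n : ℤ => heatTerm t (√t * r) (t * z) n k).comp
    (Int.measurable_floor.comp (measurable_id.div_const t))).const_mul _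

theorem sq_mul_heatP_eq {t r : ℝ} (z : ℝ) (ht : 0 < t) (hr : cos (√t * r) ≠ 0) :
    t ^ 2 * heatP t (√t * r) (t * z) = (∑' k : ℕ, ∫ μ : ℝ, rescaledMode t r z k μ).re := by
  have hsum := summable_norm_heatTerm (t * z) ht hr
  have hmode : ∀ k, ∫ μ : ℝ, rescaledMode t r z k μ =
      ((t ^ 2 : ℝ) : ℂ) * ∑' n : ℤ, heatTerm t (√t * r) (t * z) n k := fun k => by
    have hsum_k : Summable fun n : ℤ => ‖heatTerm t (√t * r) (t * z) n k‖ :=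
      hsum.comp_injective (i := fun n : ℤ => (n, k)) (Prod.mk_left_injective k)
    simp only [rescaledMode]
    rw [integral_const_mul, integral_comp_floor_div hsum_k ht.le, Complex.real_smul]
    push_cast
    ring
  have hcomm := (Summable.of_norm hsum : Summable (Function.uncurry
    (heatTerm t (√t * r) (t * z)))).tsum_comm
  simp only [hmode, tsum_mul_left, Complex.re_ofReal_mul]
  rw [heatP, hcomm]

end RescaledSeries

/-! ### The dominating function -/

section Domination

/-- The integrable function of `μ` that dominates, up to a constant, the `k`-th rescaled modes. -/
noncomputable def modeBound (k : ℕ) (μ : ℝ) : ℝ :=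
  (k + 1 : ℝ)⁻¹ * exp (-((k + 1) * |μ|))

theorem integrable_modeBound (k : ℕ) : Integrable (modeBound k) :=
  (integrable_exp_neg_mul_abs (by positivity)).const_mul _

theorem summable_integral_modeBound : Summable fun k => ∫ μ, modeBound k μ := by
  have hvalue : ∀ k : ℕ, ∫ μ, modeBound k μ = 2 * (1 / ((k + 1 : ℕ) : ℝ) ^ 2) := fun k => by
    simp only [modeBound]
    rw [integral_const_mul, integral_exp_neg_mul_abs (by positivity)]
    push_cast
    field_simp
  simp only [hvalue]
  exact ((summable_nat_add_iff 1).2 (summable_one_div_nat_pow.2 one_lt_two)).mul_left 2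

theorem mul_exp_neg_mul_le_inv {c : ℝ} (hc : 0 < c) (x : ℝ) : x * exp (-(c * x)) ≤ c⁻¹ := by
  rw [← mul_le_mul_iff_right₀ hc, mul_inv_cancel₀ hc.ne', ← mul_assoc]
  exact (mul_exp_neg_le_exp_neg_one (c * x)).trans (exp_le_one_iff.2 (by norm_num))

theorem mul_weight_mul_exp_le_modeBound {t m μ : ℝ} (k : ℕ) (ht : 0 ≤ t) (ht1 : t ≤ 1)
    (hm : |t * m - (|μ|)| ≤ t) :
    t * ((2 * k + m + 1) * exp (-(2 * k ^ 2 + 2 * (k + 1) * m + 4 * k) * t)) ≤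
      3 * exp 3 * modeBound k μ := by
  obtain ⟨hm_ge, hm_le⟩ := abs_le.1 hm
  set E := exp (-((k + 1) * |μ|)) with hE
  set X := exp (-((k + 1) ^ 2 * t)) with hX
  have hk : (0 : ℝ) < k + 1 := by positivity
  have hexp : exp (-(2 * k ^ 2 + 2 * (k + 1) * m + 4 * k) * t) ≤ exp 3 * X * E * E := by
    rw [hE, hX, ← exp_add, ← exp_add, ← exp_add, exp_le_exp]
    have hmk : (k + 1) * (|μ| - t) ≤ (k + 1) * (t * m) := by gcongr; linarith
    have hkt : 0 ≤ (k : ℝ) ^ 2 * t := by positivity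
    linarith
  have hweight : t * (2 * k + m + 1) ≤ 2 * (k + 1) * t + |μ| := by linarith
  have htX : (k + 1) * (t * X) ≤ (k + 1 : ℝ)⁻¹ := by
    calc (k + 1) * (t * X) ≤ (k + 1) * ((k + 1 : ℝ) ^ 2)⁻¹ := by
          gcongr
          exact mul_exp_neg_mul_le_inv (by positivity) t
      _ = (k + 1 : ℝ)⁻¹ := by field_simp
  have hμE : |μ| * E ≤ (k + 1 : ℝ)⁻¹ := mul_exp_neg_mul_le_inv hk |μ|
  have hE1 : E ≤ 1 := exp_le_one_iff.2 (neg_nonpos.2 (by positivity))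
  have hX1 : X ≤ 1 := exp_le_one_iff.2 (neg_nonpos.2 (by positivity))
  calc t * ((2 * k + m + 1) * exp (-(2 * k ^ 2 + 2 * (k + 1) * m + 4 * k) * t))
      = t * (2 * k + m + 1) * exp (-(2 * k ^ 2 + 2 * (k + 1) * m + 4 * k) * t) := by ring
    _ ≤ (2 * (k + 1) * t + |μ|) * (exp 3 * X * E * E) := by gcongr
    _ = exp 3 * E * (2 * ((k + 1) * (t * X)) * E + |μ| * E * X) := by ring
    _ ≤ exp 3 * E * (2 * (k + 1 : ℝ)⁻¹ * 1 + (k + 1 : ℝ)⁻¹ * 1) := by gcongr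
    _ = 3 * exp 3 * modeBound k μ := by rw [modeBound]; ring

theorem norm_rescaledMode_le {t r R : ℝ} (z : ℝ) (k : ℕ) (μ : ℝ) (ht : 0 < t) (ht1 : t ≤ 1)
    (hr : |r| ≤ R) (hcos : cos (√t * r) ≠ 0) :
    ‖rescaledMode t r z k μ‖ ≤ exp (R ^ 2 / 2) * (3 * exp 3) * modeBound k μ := by
  have hsin : sin (√t * r) ^ 2 ≤ R ^ 2 / 2 * (2 * t) := by
    calc sin (√t * r) ^ 2 ≤ (√t * r) ^ 2 := sq_le_sq.2 abs_sin_le_abs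
      _ = t * |r| ^ 2 := by rw [mul_pow, sq_sqrt ht.le, sq_abs]
      _ ≤ t * R ^ 2 := by gcongr
      _ = R ^ 2 / 2 * (2 * t) := by ring
  rw [rescaledMode, norm_mul, Complex.norm_of_nonneg ht.le]
  calc _ ≤ t * (exp (R ^ 2 / 2) * _) := by
        gcongr
        exact norm_heatTerm_le _ _ k ht.le hcos (by positivity) hsin
    _ ≤ exp (R ^ 2 / 2) * (3 * exp 3 * modeBound k μ) := by
        rw [mul_left_comm]
        exact mul_le_mul_of_nonneg_left (mul_weight_mul_exp_le_modeBound k ht.le ht1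
          (abs_mul_natAbs_floor_div_sub_abs_le ht μ)) (exp_nonneg _)
    _ = _ := by ring

theorem eventually_norm_rescaledMode_le {ι : Type*} {l : Filter ι} {t r : ι → ℝ} {r₀ : ℝ}
    (z : ι → ℝ) (ht : Tendsto t l (𝓝[>] 0)) (hr : Tendsto r l (𝓝 r₀)) :
    ∀ᶠ i in l, ∀ k μ, ‖rescaledMode (t i) (r i) (z i) k μ‖ ≤
      exp ((|r₀| + 1) ^ 2 / 2) * (3 * exp 3) * modeBound k μ := by
  filter_upwards [ht.eventually self_mem_nhdsWithin, eventually_cos_sqrt_mul_ne_zero ht hr,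
    (tendsto_nhds_of_tendsto_nhdsWithin ht).eventually (gt_mem_nhds one_pos),
    hr.abs.eventually (gt_mem_nhds (lt_add_one |r₀|))] with i hpos hcos hlt_one hri k μ
  exact norm_rescaledMode_le (z i) k μ hpos hlt_one.le hri.le hcos

end Domination

/-! ### The limiting modes -/

section LimitingModes

/-- The limit of the `k`-th rescaled modes, without the character `exp (i μ z)`. -/
noncomputable def laguerreSymbol (r : ℝ) (k : ℕ) (μ : ℝ) : ℝ :=
  |μ| * exp (-((4 * k + 2) * |μ|)) * (exp (-(|μ| * (r ^ 2 / 2))) * laguerre k (|μ| * r ^ 2))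

/-- The pointwise limit, as `t → 0⁺`, of the `k`-th rescaled modes. -/
noncomputable def laguerreMode (r z : ℝ) (k : ℕ) (μ : ℝ) : ℂ :=
  laguerreSymbol r k μ * Complex.exp (μ * z * Complex.I)

theorem continuous_laguerreMode (r z : ℝ) (k : ℕ) : Continuous (laguerreMode r z k) := by
  unfold laguerreMode laguerreSymbol
  fun_prop

theorem tendsto_rescaledMode {ι : Type*} {l : Filter ι} {t r z : ι → ℝ} {r₀ z₀ : ℝ}
    (ht : Tendsto t l (𝓝[>] 0)) (hr : Tendsto r l (𝓝 r₀)) (hz : Tendsto z l (𝓝 z₀))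
    (k : ℕ) (μ : ℝ) :
    Tendsto (fun i => rescaledMode (t i) (r i) (z i) k μ) l (𝓝 (laguerreMode r₀ z₀ k μ)) := by
  have ht0 := tendsto_nhds_of_tendsto_nhdsWithin ht
  have hn := tendsto_mul_natAbs_floor_div ht μ
  have hweight : Tendsto (fun i => t i * (2 * k + ⌊μ / t i⌋.natAbs + 1)) l (𝓝 |μ|) := by
    have hlim := (ht0.mul_const (2 * (k : ℝ) + 1)).add hn
    rw [zero_mul, zero_add] at hlim
    exact hlim.congr fun i => by ring
  have hexponent : Tendsto (fun i => -(4 * k * (k + ⌊μ / t i⌋.natAbs + 1) +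
      2 * ⌊μ / t i⌋.natAbs) * t i) l (𝓝 (-((4 * k + 2) * |μ|))) := by
    have hlim := ((ht0.const_mul (4 * (k : ℝ) * (k + 1))).add (hn.const_mul (4 * (k : ℝ) + 2))).neg
    rw [mul_zero, zero_add] at hlim
    exact hlim.congr fun i => by ring
  have hphase : Tendsto (fun i => Complex.exp (((t i * ⌊μ / t i⌋ : ℝ) : ℂ) * z i * Complex.I)) l
      (𝓝 (Complex.exp (μ * z₀ * Complex.I))) :=
    (((tendsto_mul_floor_div ht μ).ofReal.mul hz.ofReal).mul_const Complex.I).cexp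
  have hsymbol := (hweight.mul hexponent.rexp).mul (tendsto_cos_pow_mul_jacobiP ht hr hn k)
  refine (hsymbol.ofReal.mul hphase).congr fun i => ?_
  have hcharacter : (((t i * ⌊μ / t i⌋ : ℝ) : ℂ)) * z i * Complex.I =
      (⌊μ / t i⌋ : ℂ) * ((t i * z i : ℝ) : ℂ) * Complex.I := by
    push_cast
    ring
  rw [hcharacter, rescaledMode, heatTerm]
  push_cast
  ring

theorem norm_laguerreMode_le (r z : ℝ) (k : ℕ) (μ : ℝ) :
    ‖laguerreMode r z k μ‖ ≤ exp ((|r| + 1) ^ 2 / 2) * (3 * exp 3) * modeBound k μ := by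
  have hbound := eventually_norm_rescaledMode_le (fun _ => z) (l := 𝓝[>] (0 : ℝ)) tendsto_id
    (tendsto_const_nhds (x := r))
  have hlim := tendsto_rescaledMode (l := 𝓝[>] (0 : ℝ)) tendsto_id (tendsto_const_nhds (x := r))
    (tendsto_const_nhds (x := z)) k μ
  exact le_of_tendsto hlim.norm (hbound.mono fun _ h => h k μ)

theorem integrable_laguerreMode (r z : ℝ) (k : ℕ) : Integrable (laguerreMode r z k) :=
  ((integrable_modeBound k).const_mul _).mono' (continuous_laguerreMode r z k).aestronglyMeasurable
    (.of_forall (norm_laguerreMode_le r z k))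

theorem summable_integral_norm_laguerreMode (r z : ℝ) :
    Summable fun k => ∫ μ, ‖laguerreMode r z k μ‖ := by
  refine (summable_integral_modeBound.mul_left (exp ((|r| + 1) ^ 2 / 2) * (3 * exp 3))
    ).of_nonneg_of_le (fun k => integral_nonneg fun _ => norm_nonneg _) fun k => ?_
  rw [← integral_const_mul]
  exact integral_mono (integrable_laguerreMode r z k).norm ((integrable_modeBound k).const_mul _)
    (norm_laguerreMode_le r z k)

theorem tendsto_tsum_integral_rescaledMode {ι : Type*} {l : Filter ι} [l.IsCountablyGenerated]
    {t r z : ι → ℝ} {r₀ z₀ : ℝ} (ht : Tendsto t l (𝓝[>] 0)) (hr : Tendsto r l (𝓝 r₀))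
    (hz : Tendsto z l (𝓝 z₀)) :
    Tendsto (fun i => ∑' k, ∫ μ, rescaledMode (t i) (r i) (z i) k μ) l
      (𝓝 (∑' k, ∫ μ, laguerreMode r₀ z₀ k μ)) := by
  set C := exp ((|r₀| + 1) ^ 2 / 2) * (3 * exp 3)
  have hbound := eventually_norm_rescaledMode_le z ht hr
  have hbound_int : ∀ k, Integrable fun μ => C * modeBound k μ :=
    fun k => (integrable_modeBound k).const_mul C
  refine tendsto_tsum_of_dominated_convergence (bound := fun k => ∫ μ, C * modeBound k μ)
    ?_ (fun k => ?_) ?_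
  · simp only [integral_const_mul]
    exact summable_integral_modeBound.mul_left C
  · exact tendsto_integral_filter_of_dominated_convergence _
      (.of_forall fun i => (measurable_rescaledMode _ _ _ k).aestronglyMeasurable)
      (hbound.mono fun i hi => .of_forall (hi k)) (hbound_int k)
      (.of_forall (tendsto_rescaledMode ht hr hz k))
  · exact hbound.mono fun i hi k => norm_integral_le_of_norm_le (hbound_int k) (.of_forall (hi k))

end LimitingModes

/-! ### Gaveau's integrand -/

section Gaveau

/-- Gaveau's integrand at time one, without the character `exp (i λ z / 2)`. It takes the junk
value `0` at `λ = 0`, where the quotient by `sinh λ` has a removable singularity. -/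
noncomputable def gaveauSymbol (r l : ℝ) : ℝ :=
  l / sinh l * exp (-(r ^ 2 / 4 * (l * (cosh l / sinh l))))

theorem gaveauSymbol_neg (r l : ℝ) : gaveauSymbol r (-l) = gaveauSymbol r l := by
  rw [gaveauSymbol, sinh_neg, cosh_neg, neg_div_neg_eq, div_neg, neg_mul_neg, gaveauSymbol]

theorem laguerre_generating_eq_gaveauSymbol (r : ℝ) {a : ℝ} (ha : 0 < a) :
    a * exp (-(2 * a)) * exp (-(a * (r ^ 2 / 2))) * (1 / (1 - exp (-(4 * a))) *
      exp (-(a * r ^ 2) * exp (-(4 * a)) / (1 - exp (-(4 * a))))) =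
      gaveauSymbol r (2 * a) / 4 := by
  set v := exp (-(2 * a)) with hv
  have hv0 : v ≠ 0 := exp_ne_zero _
  have hv4 : exp (-(4 * a)) = v ^ 2 := by rw [hv, ← exp_nat_mul]; ring_nf
  have hv_inv : exp (2 * a) = v⁻¹ := by rw [hv, exp_neg, inv_inv]
  have hv_lt : v < 1 := exp_lt_one_iff.2 (by linarith)
  have hsub : 1 - v ^ 2 ≠ 0 := (sub_pos.2 (pow_lt_one₀ (exp_nonneg _) hv_lt two_ne_zero)).ne'
  have hsinh : sinh (2 * a) = (1 - v ^ 2) / (2 * v) := by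
    rw [sinh_eq, hv_inv, ← hv]
    field_simp
  have hcosh : cosh (2 * a) = (1 + v ^ 2) / (2 * v) := by
    rw [cosh_eq, hv_inv, ← hv]
    field_simp
  have hexponent : -(r ^ 2 / 4 * (2 * a * (cosh (2 * a) / sinh (2 * a)))) =
      -(a * (r ^ 2 / 2)) + -(a * r ^ 2) * v ^ 2 / (1 - v ^ 2) := by
    rw [hsinh, hcosh]
    field_simp
    ring
  rw [gaveauSymbol, hexponent, hsinh, hv4, exp_add]
  field_simp
  ring

theorem hasSum_laguerreSymbol (r : ℝ) {μ : ℝ} (hμ : μ ≠ 0) :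
    HasSum (fun k => laguerreSymbol r k μ) (gaveauSymbol r (2 * μ) / 4) := by
  have hμ_pos : 0 < |μ| := abs_pos.2 hμ
  have hw : |exp (-(4 * |μ|))| < 1 := by
    rw [abs_exp]
    exact exp_lt_one_iff.2 (by linarith)
  have hsum := (hasSum_laguerre_mul_pow (|μ| * r ^ 2) hw).mul_left
    (|μ| * exp (-(2 * |μ|)) * exp (-(|μ| * (r ^ 2 / 2))))
  have habs : gaveauSymbol r (2 * |μ|) = gaveauSymbol r (2 * μ) := by
    rcases abs_choice μ with h | h <;> rw [h]
    rw [mul_neg, gaveauSymbol_neg]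
  rw [laguerre_generating_eq_gaveauSymbol r hμ_pos, habs] at hsum
  refine hsum.congr_fun fun k => ?_
  have hexp : exp (-((4 * k + 2) * |μ|)) = exp (-(2 * |μ|)) * exp (-(4 * |μ|)) ^ k := by
    rw [← exp_nat_mul, ← exp_add]
    ring_nf
  rw [laguerreSymbol, hexp]
  ring

theorem tsum_integral_laguerreMode (r z : ℝ) :
    ∑' k, ∫ μ, laguerreMode r z k μ =
      (1 / 8 : ℝ) * ∫ l : ℝ, gaveauSymbol r l * Complex.exp ((l / 2 : ℝ) * z * Complex.I) := by
  set g : ℝ → ℂ := fun l => gaveauSymbol r l * Complex.exp ((l / 2 : ℝ) * z * Complex.I) with hg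
  have hsum : ∀ μ : ℝ, μ ≠ 0 → ∑' k, laguerreMode r z k μ = (1 / 4 : ℝ) * g (2 * μ) := by
    intro μ hμ
    have hmode := (Complex.hasSum_ofReal.2 (hasSum_laguerreSymbol r hμ)).mul_right
      (Complex.exp (μ * z * Complex.I))
    simp only [laguerreMode, hmode.tsum_eq, hg, mul_div_cancel_left₀ μ two_ne_zero]
    push_cast
    ring
  calc ∑' k, ∫ μ, laguerreMode r z k μ = ∫ μ, ∑' k, laguerreMode r z k μ :=
        (hasSum_integral_of_summable_integral_norm (integrable_laguerreMode r z)
          (summable_integral_norm_laguerreMode r z)).tsum_eq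
    _ = ∫ μ, (1 / 4 : ℝ) * g (2 * μ) := integral_congr_ae ((Measure.ae_ne volume 0).mono hsum)
    _ = (1 / 8 : ℝ) * ∫ l, g l := by
        rw [integral_const_mul, Measure.integral_comp_mul_left g 2, Complex.real_smul,
          abs_of_pos (by norm_num)]
        push_cast
        ring

theorem two_mul_pi_sq_mul_heisKer_one (r z : ℝ) :
    2 * π ^ 2 * heisKer 1 r z = (∑' k, ∫ μ, laguerreMode r z k μ).re := by
  have hintegrand : ∀ l : ℝ, Complex.exp (Complex.I * l * z / 2) *
      (l / Complex.sinh (l * (1 : ℝ))) * Complex.exp (-((r : ℂ) ^ 2 / 4 * l *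
        (Complex.cosh (l * (1 : ℝ)) / Complex.sinh (l * (1 : ℝ))))) =
      gaveauSymbol r l * Complex.exp ((l / 2 : ℝ) * z * Complex.I) := fun l => by
    rw [gaveauSymbol]
    push_cast
    ring_nf
  rw [tsum_integral_laguerreMode, Complex.re_ofReal_mul, heisKer]
  simp only [hintegrand]
  generalize (∫ l : ℝ, (gaveauSymbol r l : ℂ) * Complex.exp ((l / 2 : ℝ) * z * Complex.I)).re = J
  field_simp
  ring

end Gaveau

theorem tendsto_sq_mul_heatP {ι : Type*} {l : Filter ι} [l.IsCountablyGenerated] {t r z : ι → ℝ}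
    {r₀ z₀ : ℝ} (ht : Tendsto t l (𝓝[>] 0)) (hr : Tendsto r l (𝓝 r₀))
    (hz : Tendsto z l (𝓝 z₀)) :
    Tendsto (fun i => t i ^ 2 * heatP (t i) (√(t i) * r i) (t i * z i)) l
      (𝓝 (2 * π ^ 2 * heisKer 1 r₀ z₀)) := by
  rw [two_mul_pi_sq_mul_heisKer_one]
  refine ((Complex.continuous_re.tendsto _).comp
    (tendsto_tsum_integral_rescaledMode ht hr hz)).congr' ?_
  filter_upwards [ht.eventually self_mem_nhdsWithin, eventually_cos_sqrt_mul_ne_zero ht hr]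
    with i hpos hcos
  exact (sq_mul_heatP_eq (z i) hpos hcos).symm

end SU2Heat

theorem stmt_15_general :
    TendstoLocallyUniformly
      (fun (t : ℝ) (p : ℝ × ℝ) => t ^ 2 * heatP t (√t * p.1) (t * p.2))
      (fun p : ℝ × ℝ => 2 * π ^ 2 * heisKer 1 p.1 p.2) (𝓝[>] 0) :=
  SU2Heat.tendstoLocallyUniformly_of_forall_tendsto_prod fun _ =>
    SU2Heat.tendsto_sq_mul_heatP tendsto_fst tendsto_snd.fst_nhds tendsto_snd.snd_nhds

/-- Rescaled convergence to the Heisenberg-group heat kernel: for every compact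
`K ⊂ [0,∞) × ℝ`, `(r,z) ↦ t² p_t(√t r, t z)` converges uniformly on `K`, as `t → 0⁺`,
to `(r,z) ↦ 2π² h_1(r,z)`. -/
theorem stmt_15 (K : Set (ℝ × ℝ)) (hK : IsCompact K)
    (hK' : K ⊆ Set.Ici 0 ×ˢ (Set.univ : Set ℝ)) :
    TendstoUniformlyOn
      (fun (t : ℝ) (p : ℝ × ℝ) => t ^ 2 * heatP t (Real.sqrt t * p.1) (t * p.2))
      (fun p : ℝ × ℝ => 2 * Real.pi ^ 2 * heisKer 1 p.1 p.2)
      (nhdsWithin 0 (Set.Ioi 0)) K := by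
  exact (tendstoLocallyUniformlyOn_iff_tendstoUniformlyOn_of_compact hK).1
    stmt_15_general.tendstoLocallyUniformlyOn
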